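/- (Proposition 2.) Let α, β, γ, δ, χ be real numbers with χ ≠ 0 and αδ − βγ = 1, and let C, S be real numbers with C² + S² = 1. Let 𝒜, ℬ, 𝒞 be the entries of the matrix [[𝒜, ℬ],[𝒞, 𝒜]] = [[δ, β],[γ, α]] · [[C, χS],[−χ⁻¹S, C]] · [[α, β],[γ, δ]]. Let q₀, p₀ be independent standard normal random variables and let Δ(q₀,p₀) = (1/2)((𝒜q₀ + ℬp₀)² + (𝒞q₀ + 𝒜p₀)²) − (1/2)(q₀² + p₀²). Then 𝔼(Δ) ≤ ρ, where ρ = 2(αγ + βδ)² + (1/2)[(δ² + γ²)χ − (α² + β²)χ⁻¹]². -/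

import Mathlib

open MeasureTheory ProbabilityTheory

/-!
The energy error of a linear map `M` is the quadratic form of `(MᵀM - 1) / 2`, so under any
isotropic law its mean is `(tr (MᵀM) - n) / 2`. For a `2 × 2` matrix, `tr (MᵀM)` exceeds `2 det M`
by the squares of the difference of the diagonal entries and of the sum of the off-diagonal ones.
The palindromic structure of a processed leg makes its diagonal entries equal, and its off-diagonal
ones add up to `2uC + vS` with `u = αγ + βδ` and `v = (δ² + γ²)χ - (α² + β²)χ⁻¹`. Since
no factor of the leg expands area, the mean energy error is at most `(2uC + vS)² / 2`, which
Cauchy–Schwarz bounds by `2u² + v² / 2`, whatever the angle, that is, whatever the number of steps.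
-/

section EnergyError

open scoped Matrix

variable {ι : Type*} [Fintype ι]

/-- The energy error of the linear map `M` started at `x`, for the Hamiltonian `x ↦ |x|² / 2`;
positions and momenta are coordinates of the same vector. -/
noncomputable def energyError (M : Matrix ι ι ℝ) (x : ι → ℝ) : ℝ :=
  (1 / 2) * (M *ᵥ x ⬝ᵥ M *ᵥ x) - (1 / 2) * (x ⬝ᵥ x)

theorem energyError_fin_two (M : Matrix (Fin 2) (Fin 2) ℝ) (q p : ℝ) :
    energyError M ![q, p] =
      (1 / 2) * ((M 0 0 * q + M 0 1 * p) ^ 2 + (M 1 0 * q + M 1 1 * p) ^ 2) -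
        (1 / 2) * (q ^ 2 + p ^ 2) := by
  simp only [energyError, Matrix.mulVec, dotProduct, Fin.sum_univ_two, Matrix.cons_val_zero,
    Matrix.cons_val_one, Matrix.cons_val_fin_one, sq]

theorem energyError_eq_dotProduct_mulVec [DecidableEq ι] (M : Matrix ι ι ℝ) (x : ι → ℝ) :
    energyError M x = (1 / 2) * (x ⬝ᵥ (Mᵀ * M - 1) *ᵥ x) := by
  rw [energyError, Matrix.sub_mulVec, Matrix.one_mulVec, dotProduct_sub, ← Matrix.mulVec_mulVec,
    Matrix.dotProduct_transpose_mulVec, mul_sub]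

theorem trace_transpose_mul_self_fin_two {R : Type*} [CommRing R] (M : Matrix (Fin 2) (Fin 2) R) :
    (Mᵀ * M).trace = 2 * M.det + (M 0 0 - M 1 1) ^ 2 + (M 0 1 + M 1 0) ^ 2 := by
  simp only [Matrix.trace_fin_two, Matrix.mul_apply, Matrix.transpose_apply, Fin.sum_univ_two,
    Matrix.det_fin_two]
  ring

end EnergyError

section Isotropic

open scoped Matrix

variable {Ω ι : Type*} [MeasurableSpace Ω] [DecidableEq ι] {X : Ω → ι → ℝ} {μ : Measure Ω}

/-- A random vector is isotropic if its coordinates are square-integrable and its matrix of second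
moments is the identity. The moments are taken about `0`, not about the mean. -/
structure IsIsotropic (X : Ω → ι → ℝ) (μ : Measure Ω) : Prop where
  memLp (i : ι) : MemLp (fun ω ↦ X ω i) 2 μ
  integral_mul (i j : ι) : ∫ ω, X ω i * X ω j ∂μ = (1 : Matrix ι ι ℝ) i j

theorem IsIsotropic.of_pairwise_indepFun (hX : ∀ i, MemLp (fun ω ↦ X ω i) 2 μ)
    (hmean : ∀ i, ∫ ω, X ω i ∂μ = 0) (hvar : ∀ i, Var[fun ω ↦ X ω i; μ] = 1)
    (hindep : Pairwise fun i j ↦ IndepFun (fun ω ↦ X ω i) (fun ω ↦ X ω j) μ) :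
    IsIsotropic X μ where
  memLp := hX
  integral_mul i j := by
    obtain rfl | hij := eq_or_ne i j
    · rw [Matrix.one_apply_eq, ← hvar i,
        variance_of_integral_eq_zero (hX i).aestronglyMeasurable.aemeasurable (hmean i)]
      simp only [sq]
    · rw [Matrix.one_apply_ne hij, (hindep hij).integral_fun_mul_eq_mul_integral
        (hX i).aestronglyMeasurable (hX j).aestronglyMeasurable, hmean i, zero_mul]

theorem isIsotropic_gaussianReal_prod :
    IsIsotropic (fun x : ℝ × ℝ ↦ ![x.1, x.2]) ((gaussianReal 0 1).prod (gaussianReal 0 1)) := by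
  have hlaw (i : Fin 2) : HasLaw (fun x : ℝ × ℝ ↦ ![x.1, x.2] i) (gaussianReal 0 1)
      ((gaussianReal 0 1).prod (gaussianReal 0 1)) := by
    fin_cases i
    · exact measurePreserving_fst.hasLaw
    · exact measurePreserving_snd.hasLaw
  have hindep : IndepFun Prod.fst Prod.snd ((gaussianReal 0 1).prod (gaussianReal 0 1)) :=
    indepFun_prod measurable_id measurable_id
  refine .of_pairwise_indepFun (fun i ↦ ?_) (fun i ↦ ?_) (fun i ↦ ?_) fun i j hij ↦ ?_
  · have h := memLp_id_gaussianReal (μ := 0) (v := 1) 2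
    rw [← (hlaw i).map_eq] at h
    exact h.comp_of_map (hlaw i).aemeasurable
  · rw [(hlaw i).integral_eq, integral_id_gaussianReal]
  · rw [(hlaw i).variance_eq, variance_id_gaussianReal, NNReal.coe_one]
  · fin_cases i <;> fin_cases j
    exacts [(hij rfl).elim, hindep, hindep.symm, (hij rfl).elim]

variable [Fintype ι]

theorem IsIsotropic.integral_dotProduct_mulVec (hX : IsIsotropic X μ) (Q : Matrix ι ι ℝ) :
    ∫ ω, X ω ⬝ᵥ Q *ᵥ X ω ∂μ = Q.trace := by
  have hint (i j : ι) : Integrable (fun ω ↦ Q i j * (X ω i * X ω j)) μ :=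
    ((hX.memLp i).integrable_mul (hX.memLp j)).const_mul _
  calc ∫ ω, X ω ⬝ᵥ Q *ᵥ X ω ∂μ
      = ∫ ω, ∑ i, ∑ j, Q i j * (X ω i * X ω j) ∂μ := by
        simp only [dotProduct, Matrix.mulVec, Finset.mul_sum, mul_left_comm]
    _ = ∑ i, ∑ j, Q i j * ∫ ω, X ω i * X ω j ∂μ := by
        rw [integral_finsetSum _ fun i _ ↦ integrable_finsetSum _ fun j _ ↦ hint i j]
        simp_rw [integral_finsetSum _ fun j _ ↦ hint _ j, integral_const_mul]
    _ = Q.trace := by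
        simp only [hX.integral_mul, Matrix.one_apply, mul_ite, mul_one, mul_zero,
          Finset.sum_ite_eq, Finset.mem_univ, if_true, Matrix.trace, Matrix.diag_apply]

theorem IsIsotropic.integral_energyError (hX : IsIsotropic X μ) (M : Matrix ι ι ℝ) :
    ∫ ω, energyError M (X ω) ∂μ = (1 / 2) * ((Mᵀ * M).trace - Fintype.card ι) := by
  simp_rw [energyError_eq_dotProduct_mulVec]
  rw [integral_const_mul, hX.integral_dotProduct_mulVec, Matrix.trace_sub, Matrix.trace_one]

theorem IsIsotropic.integral_energyError_fin_two {X : Ω → Fin 2 → ℝ} (hX : IsIsotropic X μ)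
    (M : Matrix (Fin 2) (Fin 2) ℝ) :
    ∫ ω, energyError M (X ω) ∂μ =
      (M.det - 1) + ((M 0 0 - M 1 1) ^ 2 + (M 0 1 + M 1 0) ^ 2) / 2 := by
  rw [hX.integral_energyError, trace_transpose_mul_self_fin_two, Fintype.card_fin, Nat.cast_ofNat]
  ring

end Isotropic

section ProcessedLeg

variable {K : Type*} [Field K]

/-- The matrix `P⋆ R P` of a symmetric processed leg: the preprocessor `P`, then the kernel steps
`R`, then the adjoint postprocessor `P⋆`. The pair `(C, S)` stands for `(cos Nθ, sin Nθ)`. -/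
def processedLeg (α β γ δ χ C S : K) : Matrix (Fin 2) (Fin 2) K :=
  !![δ, β; γ, α] * !![C, χ * S; -χ⁻¹ * S, C] * !![α, β; γ, δ]

theorem det_processedLeg (α β γ δ : K) {χ : K} (hχ : χ ≠ 0) (C S : K) :
    (processedLeg α β γ δ χ C S).det = (α * δ - β * γ) ^ 2 * (C ^ 2 + S ^ 2) := by
  simp only [processedLeg, Matrix.det_mul, Matrix.det_fin_two_of]
  field_simp
  ring

theorem processedLeg_zero_zero_eq_one_one (α β γ δ χ C S : K) :
    processedLeg α β γ δ χ C S 0 0 = processedLeg α β γ δ χ C S 1 1 := by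
  simp only [processedLeg, Matrix.mul_fin_two, Matrix.of_apply, Matrix.cons_val_zero,
    Matrix.cons_val_one, Matrix.cons_val', Matrix.cons_val_fin_one]
  ring

theorem processedLeg_zero_one_add_one_zero (α β γ δ χ C S : K) :
    processedLeg α β γ δ χ C S 0 1 + processedLeg α β γ δ χ C S 1 0 =
      2 * (α * γ + β * δ) * C + ((δ ^ 2 + γ ^ 2) * χ - (α ^ 2 + β ^ 2) * χ⁻¹) * S := by
  simp only [processedLeg, Matrix.mul_fin_two, Matrix.of_apply, Matrix.cons_val_zero,
    Matrix.cons_val_one, Matrix.cons_val', Matrix.cons_val_fin_one]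
  ring

end ProcessedLeg

theorem expected_energy_error_bound_general {Ω : Type*} [MeasurableSpace Ω] {μ : Measure Ω}
    {X : Ω → Fin 2 → ℝ} (hX : IsIsotropic X μ) (α β γ δ χ C S : ℝ) (hχ : χ ≠ 0)
    (hdet : |α * δ - β * γ| ≤ 1) (hCS : C ^ 2 + S ^ 2 ≤ 1) :
    ∫ ω, energyError (processedLeg α β γ δ χ C S) (X ω) ∂μ ≤
      2 * (α * γ + β * δ) ^ 2 +
        (1 / 2) * ((δ ^ 2 + γ ^ 2) * χ - (α ^ 2 + β ^ 2) * χ⁻¹) ^ 2 := by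
  rw [hX.integral_energyError_fin_two, processedLeg_zero_zero_eq_one_one,
    processedLeg_zero_one_add_one_zero]
  set u := α * γ + β * δ
  set v := (δ ^ 2 + γ ^ 2) * χ - (α ^ 2 + β ^ 2) * χ⁻¹
  have hdet_leg : (processedLeg α β γ δ χ C S).det ≤ 1 := by
    rw [det_processedLeg α β γ δ hχ]
    exact mul_le_one₀ ((sq_le_one_iff_abs_le_one _).2 hdet) (by positivity) hCS
  have hcauchy_schwarz : (2 * u * C + v * S) ^ 2 ≤ (2 * u) ^ 2 + v ^ 2 :=
    calc (2 * u * C + v * S) ^ 2 ≤ ((2 * u) ^ 2 + v ^ 2) * (C ^ 2 + S ^ 2) := by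
          linarith [sq_nonneg (2 * u * S - v * C)]
      _ ≤ (2 * u) ^ 2 + v ^ 2 := mul_le_of_le_one_right (by positivity) hCS
  linarith

/-- Proposition 2: the expected energy error of a symmetric processed leg is
bounded by `ρ = 2(αγ+βδ)² + (1/2)[(δ²+γ²)χ - (α²+β²)χ⁻¹]²`. -/
theorem expected_energy_error_bound (α β γ δ χ C S : ℝ) (hχ : χ ≠ 0)
    (hdet : α * δ - β * γ = 1) (hCS : C ^ 2 + S ^ 2 = 1) :
    let M : Matrix (Fin 2) (Fin 2) ℝ :=
      !![δ, β; γ, α] * !![C, χ * S; -χ⁻¹ * S, C] * !![α, β; γ, δ]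
    (∫ x : ℝ × ℝ,
        ((1 / 2) * ((M 0 0 * x.1 + M 0 1 * x.2) ^ 2 + (M 1 0 * x.1 + M 1 1 * x.2) ^ 2) -
          (1 / 2) * (x.1 ^ 2 + x.2 ^ 2))
        ∂((gaussianReal 0 1).prod (gaussianReal 0 1))) ≤
      2 * (α * γ + β * δ) ^ 2 +
        (1 / 2) * ((δ ^ 2 + γ ^ 2) * χ - (α ^ 2 + β ^ 2) * χ⁻¹) ^ 2 := by
  intro M
  simp_rw [← energyError_fin_two M]
  exact expected_energy_error_bound_general isIsotropic_gaussianReal_prod α β γ δ χ C S hχ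
    (by rw [hdet, abs_one]) hCS.le
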